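/- For every θ > 0 there exists a constant c(θ) > 0, depending only on θ, such that for every integer n ≥ 1 and every mesh Δₙ with 0 < Δₙ ≤ min(1, 1/(2θ)), the centered quadratic sum D_{1,n} := (2θ/n) Σ_{k=0}^{n−1} ( X₁(kΔₙ)² − E[X₁(kΔₙ)²] ) satisfies E[ D_{1,n}² ] ≤ c(θ) · (nΔₙ)^{−1}. -/

import Mathlib

open MeasureTheory ProbabilityTheory Real Filter Finset
open scoped Topology ENNReal NNReal

noncomputable section

/-- Kolmogorov distance between two Borel measures on `ℝ`. -/
def dKol (μ ν : Measure ℝ) : ℝ :=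
  ⨆ z : ℝ, |(μ (Set.Iic z)).toReal - (ν (Set.Iic z)).toReal|

/-- `X 0, X 1 : ℝ → Ω → ℝ` is a pair of independent centered Gaussian processes,
started at `0`, with almost surely continuous paths on `[0,∞)` and the
Ornstein–Uhlenbeck covariance `E[Xᵢ(s)Xᵢ(t)] = (e^{−θ|t−s|} − e^{−θ(t+s)})/(2θ)`. -/
structure IsOUPair {Ω : Type} [MeasureSpace Ω] (θ : ℝ) (X : Fin 2 → ℝ → Ω → ℝ) : Prop where
  meas : ∀ i t, Measurable (X i t)
  gaussian : ∀ (i : Fin 2) (n : ℕ) (t : Fin n → ℝ) (c : Fin n → ℝ), (∀ j, 0 ≤ t j) →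
      ∃ v : NNReal, Measure.map (fun ω => ∑ j, c j * X i (t j) ω) ℙ = gaussianReal 0 v
  indep : IndepFun (fun ω t => X 0 t ω) (fun ω t => X 1 t ω) ℙ
  cont : ∀ᵐ ω ∂(ℙ : Measure Ω), ∀ i, ContinuousOn (fun t => X i t ω) (Set.Ici 0)
  init : ∀ i ω, X i 0 ω = 0
  cov : ∀ (i : Fin 2) (s t : ℝ), 0 ≤ s → 0 ≤ t →
      ∫ ω, X i s ω * X i t ω ∂ℙ
        = (Real.exp (-θ * |t - s|) - Real.exp (-θ * (t + s))) / (2 * θ)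

variable {Ω : Type} [MeasureSpace Ω]

/-- `F_T := T^{-1/2} ∫₀^T X₁(u) X₂(u) du`. -/
def ouF (X : Fin 2 → ℝ → Ω → ℝ) (T : ℝ) (ω : Ω) : ℝ :=
  (1 / Real.sqrt T) * ∫ u in (0:ℝ)..T, X 0 u ω * X 1 u ω

/-- `X̄ᵢ(T) := T^{-1} ∫₀^T Xᵢ(u) du`. -/
def ouXbar (X : Fin 2 → ℝ → Ω → ℝ) (i : Fin 2) (T : ℝ) (ω : Ω) : ℝ :=
  (1 / T) * ∫ u in (0:ℝ)..T, X i u ω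

/-- `Y_{ij}(T) := ∫₀^T Xᵢ(u)Xⱼ(u) du − T·X̄ᵢ(T)·X̄ⱼ(T)`. -/
def ouY (X : Fin 2 → ℝ → Ω → ℝ) (i j : Fin 2) (T : ℝ) (ω : Ω) : ℝ :=
  (∫ u in (0:ℝ)..T, X i u ω * X j u ω) - T * ouXbar X i T ω * ouXbar X j T ω

/-- Yule's nonsense correlation `ρ(T)`. -/
def ouRho (X : Fin 2 → ℝ → Ω → ℝ) (T : ℝ) (ω : Ω) : ℝ :=
  ouY X 0 1 T ω / Real.sqrt (ouY X 0 0 T ω * ouY X 1 1 T ω)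

/-- `A(n) := (√Tₙ/n) Σ_{k<n} X₁(kΔ)X₂(kΔ)` with `Tₙ = nΔ`. -/
def ouA (X : Fin 2 → ℝ → Ω → ℝ) (n : ℕ) (Δ : ℝ) (ω : Ω) : ℝ :=
  (Real.sqrt (n * Δ) / n) * ∑ k ∈ Finset.range n, X 0 (k * Δ) ω * X 1 (k * Δ) ω

/-- `X̃ᵢ(n) := n^{-1} Σ_{k<n} Xᵢ(kΔ)`. -/
def ouXtilde (X : Fin 2 → ℝ → Ω → ℝ) (i : Fin 2) (n : ℕ) (Δ : ℝ) (ω : Ω) : ℝ :=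
  (1 / n) * ∑ k ∈ Finset.range n, X i (k * Δ) ω

/-- `Ỹ_{ij}(n) := Δ Σ_{k<n} Xᵢ(kΔ)Xⱼ(kΔ) − Tₙ·X̃ᵢ(n)·X̃ⱼ(n)` with `Tₙ = nΔ`. -/
def ouYtilde (X : Fin 2 → ℝ → Ω → ℝ) (i j : Fin 2) (n : ℕ) (Δ : ℝ) (ω : Ω) : ℝ :=
  Δ * ∑ k ∈ Finset.range n, X i (k * Δ) ω * X j (k * Δ) ω
    - (n * Δ) * ouXtilde X i n Δ ω * ouXtilde X j n Δ ω

/-- Yule's discrete nonsense correlation `ρ̃(n)`. -/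
def ouRhoTilde (X : Fin 2 → ℝ → Ω → ℝ) (n : ℕ) (Δ : ℝ) (ω : Ω) : ℝ :=
  ouYtilde X 0 1 n Δ ω / Real.sqrt (ouYtilde X 0 0 n Δ ω * ouYtilde X 1 1 n Δ ω)

lemma gauss_int4 (v : ℝ≥0) : ∫ x, x ^ 4 ∂(gaussianReal 0 v) = 3 * (v : ℝ) ^ 2 := by
  have h := iteratedDeriv_mgf_zero (X := id) (μ := gaussianReal 0 v)
    (by simp [integrableExpSet_id_gaussianReal]) 4
  have h2 : ∫ x, x ^ 4 ∂(gaussianReal 0 v) = iteratedDeriv 4 (mgf id (gaussianReal 0 v)) 0 := by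
    rw [h]; simp
  rw [h2, mgf_id_gaussianReal]
  have e : ∀ t : ℝ, HasDerivAt (fun t : ℝ => rexp (0 * t + v * t ^ 2 / 2))
      (v * t * rexp (0 * t + v * t ^ 2 / 2)) t := by
    intro t
    have : HasDerivAt (fun t : ℝ => 0 * t + v * t ^ 2 / 2) (v * t) t := by
      have := (((hasDerivAt_id t).const_mul (0:ℝ)).add
        ((((hasDerivAt_id t).pow 2).const_mul (v:ℝ)).div_const 2))
      convert! this using 1
      simp; ring
    convert! this.exp using 1
    ring
  have pm : ∀ (a : ℝ) (k : ℕ) (t : ℝ), HasDerivAt (fun t : ℝ => a * t ^ k) (a * (k * t ^ (k-1))) t :=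
    fun a k t => (hasDerivAt_pow k t).const_mul a
  have d1 : deriv (fun t : ℝ => rexp (0 * t + v * t ^ 2 / 2))
      = fun t => (v * t ^ 1) * rexp (0 * t + v * t ^ 2 / 2) := by
    funext t; rw [(e t).deriv]; simp
  have d2 : deriv (fun t : ℝ => (v * t ^ 1) * rexp (0 * t + v * t ^ 2 / 2))
      = fun t => (v * t ^ 0 + v ^ 2 * t ^ 2) * rexp (0 * t + v * t ^ 2 / 2) := by
    funext t; rw [((pm v 1 t).fun_mul (e t)).deriv]; simp; ring
  have d3 : deriv (fun t : ℝ => (v * t ^ 0 + v ^ 2 * t ^ 2) * rexp (0 * t + v * t ^ 2 / 2))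
      = fun t => (3 * v ^ 2 * t ^ 1 + v ^ 3 * t ^ 3) * rexp (0 * t + v * t ^ 2 / 2) := by
    funext t
    rw [(((pm v 0 t).fun_add (pm (v ^ 2) 2 t)).fun_mul (e t)).deriv]; simp; ring
  have d4 : deriv (fun t : ℝ => (3 * v ^ 2 * t ^ 1 + v ^ 3 * t ^ 3)
        * rexp (0 * t + v * t ^ 2 / 2)) 0 = 3 * (v : ℝ) ^ 2 := by
    rw [(((pm (3 * v ^ 2) 1 0).fun_add (pm (v ^ 3) 3 0)).fun_mul (e 0)).deriv]; simp
  rw [iteratedDeriv_succ', iteratedDeriv_succ', iteratedDeriv_succ', iteratedDeriv_succ',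
    iteratedDeriv_zero, d1, d2, d3, d4]

lemma gauss_int2 (v : ℝ≥0) : ∫ x, x ^ 2 ∂(gaussianReal 0 v) = (v : ℝ) := by
  have h := variance_id_gaussianReal (μ := 0) (v := v)
  rw [variance_of_integral_eq_zero aemeasurable_id (by simp)] at h
  simpa using h

lemma ou_lin {θ : ℝ} [IsProbabilityMeasure (ℙ : Measure Ω)]
    {X : Fin 2 → ℝ → Ω → ℝ} (hX : IsOUPair θ X) {s t : ℝ} (hs : 0 ≤ s) (ht : 0 ≤ t) (a b : ℝ) :
    MemLp (fun ω => a * X 0 s ω + b * X 0 t ω) 4 ℙ ∧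
    ∫ ω, (a * X 0 s ω + b * X 0 t ω) ^ 4 ∂ℙ
      = 3 * (∫ ω, (a * X 0 s ω + b * X 0 t ω) ^ 2 ∂ℙ) ^ 2 := by
  obtain ⟨v, hv⟩ := hX.gaussian 0 2 ![s, t] ![a, b] (by
    intro j; fin_cases j <;> simp [hs, ht])
  simp only [Fin.sum_univ_two, Matrix.cons_val_zero, Matrix.cons_val_one] at hv
  have hm : Measurable (fun ω => a * X 0 s ω + b * X 0 t ω) :=
    ((hX.meas 0 s).const_mul a).add ((hX.meas 0 t).const_mul b)
  have key : ∀ k : ℕ, ∫ ω, (a * X 0 s ω + b * X 0 t ω) ^ k ∂ℙ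
      = ∫ x, x ^ k ∂(gaussianReal 0 v) := by
    intro k
    rw [← hv, integral_map hm.aemeasurable (by fun_prop)]
  refine ⟨?_, ?_⟩
  · have h := memLp_id_gaussianReal' (μ := 0) (v := v) 4 (by simp)
    rw [← hv] at h
    exact h.comp_of_map hm.aemeasurable
  · rw [key, key, gauss_int4, gauss_int2]

lemma ou_memLp {θ : ℝ} [IsProbabilityMeasure (ℙ : Measure Ω)]
    {X : Fin 2 → ℝ → Ω → ℝ} (hX : IsOUPair θ X) {s : ℝ} (hs : 0 ≤ s) :
    MemLp (X 0 s) 4 ℙ := by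
  simpa using (ou_lin hX hs hs 1 0).1

lemma ou_sq_memLp {θ : ℝ} [IsProbabilityMeasure (ℙ : Measure Ω)]
    {X : Fin 2 → ℝ → Ω → ℝ} (hX : IsOUPair θ X) {s t : ℝ} (hs : 0 ≤ s) (ht : 0 ≤ t) :
    MemLp (fun ω => X 0 s ω * X 0 t ω) 2 ℙ := by
  have : ENNReal.HolderTriple 4 4 2 := ⟨by
    rw [← ENNReal.toReal_eq_toReal_iff' (by simp) (by simp), ENNReal.toReal_add (by simp) (by simp)]
    norm_num⟩
  exact (ou_memLp hX ht).mul (p := 4) (q := 4) (ou_memLp hX hs)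

lemma ou_iss {θ : ℝ} [IsProbabilityMeasure (ℙ : Measure Ω)]
    {X : Fin 2 → ℝ → Ω → ℝ} (hX : IsOUPair θ X) {s t u w : ℝ} (hs : 0 ≤ s) (ht : 0 ≤ t)
    (hu : 0 ≤ u) (hw : 0 ≤ w) :
    Integrable (fun ω => (X 0 s ω * X 0 t ω) * (X 0 u ω * X 0 w ω)) ℙ :=
  (ou_sq_memLp hX hs ht).integrable_mul (ou_sq_memLp hX hu hw)

lemma ou_isserlis {θ : ℝ} [IsProbabilityMeasure (ℙ : Measure Ω)]
    {X : Fin 2 → ℝ → Ω → ℝ} (hX : IsOUPair θ X) {s t : ℝ} (hs : 0 ≤ s) (ht : 0 ≤ t) :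
    ∫ ω, X 0 s ω ^ 2 * X 0 t ω ^ 2 ∂ℙ
      = (∫ ω, X 0 s ω ^ 2 ∂ℙ) * (∫ ω, X 0 t ω ^ 2 ∂ℙ)
        + 2 * (∫ ω, X 0 s ω * X 0 t ω ∂ℙ) ^ 2 := by
  have i2 : ∀ {s t : ℝ}, 0 ≤ s → 0 ≤ t → Integrable (fun ω => X 0 s ω * X 0 t ω) ℙ :=
    fun hs ht => (ou_sq_memLp hX hs ht).integrable (by norm_num)
  have hss : Integrable (fun ω => X 0 s ω ^ 2) ℙ := by simpa [pow_two] using i2 hs hs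
  have htt : Integrable (fun ω => X 0 t ω ^ 2) ℙ := by simpa [pow_two] using i2 ht ht
  have hst := i2 hs ht
  have hs4 : Integrable (fun ω => X 0 s ω ^ 4) ℙ := by
    refine (ou_iss hX hs hs hs hs).congr (ae_of_all _ fun ω => ?_); simp only; ring
  have ht4 : Integrable (fun ω => X 0 t ω ^ 4) ℙ := by
    refine (ou_iss hX ht ht ht ht).congr (ae_of_all _ fun ω => ?_); simp only; ring
  have hst4 : Integrable (fun ω => X 0 s ω ^ 2 * X 0 t ω ^ 2) ℙ := by
    refine (ou_iss hX hs hs ht ht).congr (ae_of_all _ fun ω => ?_); simp only; ring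
  have q : ∀ b : ℝ, ∫ ω, (1 * X 0 s ω + b * X 0 t ω) ^ 2 ∂ℙ
      = (∫ ω, X 0 s ω ^ 2 ∂ℙ) + 2 * b * (∫ ω, X 0 s ω * X 0 t ω ∂ℙ)
        + b ^ 2 * (∫ ω, X 0 t ω ^ 2 ∂ℙ) := by
    intro b
    rw [← integral_const_mul, ← integral_const_mul, ← integral_add hss (hst.const_mul _),
      ← integral_add (hss.fun_add (hst.const_mul _)) (htt.const_mul _)]
    congr 1; funext ω; ring
  have p1 := ou_lin hX hs ht 1 1
  have p2 := ou_lin hX hs ht 1 (-1)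
  have p3 := (ou_lin hX hs hs 1 0).2
  have p4 := (ou_lin hX ht ht 1 0).2
  simp only [one_mul, zero_mul, add_zero] at p3 p4
  have j : ∀ b : ℝ, Integrable (fun ω => (1 * X 0 s ω + b * X 0 t ω) ^ 4) ℙ := by
    intro b
    have h := (ou_lin hX hs ht 1 b).1.integrable_norm_pow (by norm_num)
    refine h.congr (ae_of_all _ fun ω => ?_)
    simp [Even.pow_abs (show Even 4 by decide)]
  have tot : (∫ ω, (1 * X 0 s ω + 1 * X 0 t ω) ^ 4 ∂ℙ)
      + (∫ ω, (1 * X 0 s ω + (-1) * X 0 t ω) ^ 4 ∂ℙ)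
      = 2 * (∫ ω, X 0 s ω ^ 4 ∂ℙ) + 12 * (∫ ω, X 0 s ω ^ 2 * X 0 t ω ^ 2 ∂ℙ)
        + 2 * (∫ ω, X 0 t ω ^ 4 ∂ℙ) := by
    rw [← integral_add (j 1) (j (-1)), ← integral_const_mul, ← integral_const_mul,
      ← integral_const_mul, ← integral_add (hs4.const_mul _) (hst4.const_mul _),
      ← integral_add ((hs4.const_mul _).fun_add (hst4.const_mul _)) (ht4.const_mul _)]
    congr 1; funext ω; ring
  rw [p1.2, p2.2, p3, p4, q, q] at tot
  linarith

lemma ou_cov_sq {θ : ℝ} [IsProbabilityMeasure (ℙ : Measure Ω)]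
    {X : Fin 2 → ℝ → Ω → ℝ} (hX : IsOUPair θ X) {s t : ℝ} (hs : 0 ≤ s) (ht : 0 ≤ t) :
    Integrable (fun ω => (X 0 s ω ^ 2 - ∫ ω', X 0 s ω' ^ 2 ∂ℙ)
      * (X 0 t ω ^ 2 - ∫ ω', X 0 t ω' ^ 2 ∂ℙ)) ℙ ∧
    ∫ ω, (X 0 s ω ^ 2 - ∫ ω', X 0 s ω' ^ 2 ∂ℙ) * (X 0 t ω ^ 2 - ∫ ω', X 0 t ω' ^ 2 ∂ℙ) ∂ℙ
      = 2 * (∫ ω, X 0 s ω * X 0 t ω ∂ℙ) ^ 2 := by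
  have hs2 : MemLp (fun ω => X 0 s ω ^ 2) 2 ℙ := by simpa [pow_two] using ou_sq_memLp hX hs hs
  have ht2 : MemLp (fun ω => X 0 t ω ^ 2) 2 ℙ := by simpa [pow_two] using ou_sq_memLp hX ht ht
  have h := covariance_eq_sub hs2 ht2
  refine ⟨(hs2.sub (memLp_const _)).integrable_mul (ht2.sub (memLp_const _)), ?_⟩
  have h' := ou_isserlis hX hs ht
  simp only [covariance, Pi.mul_apply] at h
  rw [h, h']; ring

lemma geo_sum (r : ℝ) (h0 : 0 < r) (h1 : r < 1) (n j : ℕ) :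
    ∑ k ∈ Finset.range n, r ^ (((j : ℤ) - k).natAbs) ≤ 2 / (1 - r) := by
  have g : ∀ m, ∑ i ∈ Finset.range m, r ^ i ≤ 1 / (1 - r) := by
    intro m
    rw [le_div_iff₀ (by linarith), mul_comm, mul_neg_geom_sum]
    have : 0 < r ^ m := by positivity
    linarith
  have A : ∑ k ∈ Finset.range (j + 1), r ^ (((j : ℤ) - k).natAbs)
      = ∑ i ∈ Finset.range (j + 1), r ^ i := by
    rw [← Finset.sum_range_reflect]
    refine Finset.sum_congr rfl fun k hk => ?_
    rw [Finset.mem_range] at hk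
    congr 1; omega
  have B : ∑ k ∈ Finset.range n, r ^ (((j : ℤ) - k).natAbs)
      ≤ ∑ k ∈ Finset.range (j + 1 + n), r ^ (((j : ℤ) - k).natAbs) :=
    Finset.sum_le_sum_of_subset_of_nonneg (by intro x; simp; omega) (fun _ _ _ => by positivity)
  rw [Finset.sum_range_add, A] at B
  have C : ∑ k ∈ Finset.range n, r ^ (((j : ℤ) - ((j + 1 + k : ℕ) : ℤ)).natAbs)
      ≤ ∑ k ∈ Finset.range n, r ^ k := by
    refine Finset.sum_le_sum fun k _ => pow_le_pow_of_le_one h0.le h1.le (by omega)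
  have := g (j + 1); have := g n
  have e : 2 / (1 - r) = 1 / (1 - r) + 1 / (1 - r) := by ring
  linarith

lemma cov_bound {θ : ℝ} (hθ : 0 < θ) {Δ : ℝ} (hΔ : 0 < Δ) (j k : ℕ) :
    (((rexp (-θ * |(k:ℝ) * Δ - j * Δ|) - rexp (-θ * ((k:ℝ) * Δ + j * Δ))) / (2 * θ)) ^ 2)
      ≤ rexp (-(2 * θ * Δ)) ^ (((j : ℤ) - k).natAbs) / (4 * θ ^ 2) := by
  have hab : (((j : ℤ) - k).natAbs : ℝ) * Δ = |(k:ℝ) * Δ - j * Δ| := by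
    rw [← sub_mul, abs_mul, abs_of_pos hΔ, abs_sub_comm, Nat.cast_natAbs]; push_cast; rfl
  have e1 : rexp (-(2 * θ * Δ)) ^ (((j : ℤ) - k).natAbs) = rexp (-θ * |(k:ℝ) * Δ - j * Δ|) ^ 2 := by
    rw [← Real.exp_nat_mul, ← Real.exp_nat_mul, ← hab]; congr 1; push_cast; ring
  have le : rexp (-θ * ((k:ℝ) * Δ + j * Δ)) ≤ rexp (-θ * |(k:ℝ) * Δ - j * Δ|) := by
    apply Real.exp_le_exp.2
    have h1 : (0:ℝ) ≤ k * Δ := by positivity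
    have h2 : (0:ℝ) ≤ j * Δ := by positivity
    have : |(k:ℝ) * Δ - j * Δ| ≤ (k:ℝ) * Δ + j * Δ := abs_le.2 ⟨by linarith, by linarith⟩
    nlinarith
  have p := Real.exp_pos (-θ * ((k:ℝ) * Δ + j * Δ))
  rw [e1, div_pow, show (2 * θ) ^ 2 = 4 * θ ^ 2 by ring]
  gcongr
  · linarith

/-- there is `c(θ) > 0` such that for all `n ≥ 1` and meshes
`0 < Δₙ ≤ min(1, 1/(2θ))`, the centered quadratic sum
`D_{1,n} = (2θ/n) Σ_{k<n} (X₁(kΔₙ)² − E[X₁(kΔₙ)²])` satisfies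
`E[D_{1,n}²] ≤ c(θ)·(nΔₙ)^{−1}`. -/
theorem stmt_15 (θ : ℝ) (hθ : 0 < θ) [IsProbabilityMeasure (ℙ : Measure Ω)]
    (X : Fin 2 → ℝ → Ω → ℝ) (hX : IsOUPair θ X) :
    ∃ c : ℝ, 0 < c ∧ ∀ n : ℕ, 1 ≤ n → ∀ Δ : ℝ, 0 < Δ → Δ ≤ min 1 (1 / (2 * θ)) →
      ∫ ω, ((2 * θ / (n : ℝ))
          * ∑ k ∈ Finset.range n,
              ((X 0 ((k : ℝ) * Δ) ω) ^ 2 - ∫ ω', (X 0 ((k : ℝ) * Δ) ω') ^ 2 ∂ℙ)) ^ 2 ∂ℙ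
        ≤ c / ((n : ℝ) * Δ) := by
  refine ⟨4 / θ, by positivity, fun n hn Δ hΔ hΔ' => ?_⟩
  have hx : 2 * θ * Δ ≤ 1 := by
    have := (le_div_iff₀ (by positivity)).1 (hΔ'.trans (min_le_right _ _))
    linarith
  have hn0 : (0:ℝ) < n := by exact_mod_cast hn
  have nn : ∀ k : ℕ, (0:ℝ) ≤ k * Δ := fun k => by positivity
  set r := rexp (-(2 * θ * Δ)) with hr
  have hr0 : 0 < r := Real.exp_pos _
  have hxp : 0 < 2 * θ * Δ := by positivity
  have hr1 : r < 1 := by rw [hr, Real.exp_lt_one_iff]; linarith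
  have hrb : θ * Δ ≤ 1 - r := by
    have h1 : 2 * θ * Δ + 1 ≤ rexp (2 * θ * Δ) := Real.add_one_le_exp _
    have h2 : r * rexp (2 * θ * Δ) = 1 := by rw [hr, ← Real.exp_add]; simp
    have h3 : r * (2 * θ * Δ + 1) ≤ 1 := by
      have := mul_le_mul_of_nonneg_left h1 hr0.le
      linarith
    nlinarith
  have expand : ∀ ω, ((2 * θ / (n : ℝ))
          * ∑ k ∈ Finset.range n,
              ((X 0 ((k : ℝ) * Δ) ω) ^ 2 - ∫ ω', (X 0 ((k : ℝ) * Δ) ω') ^ 2 ∂ℙ)) ^ 2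
      = (2 * θ / (n : ℝ)) ^ 2 * ∑ j ∈ Finset.range n, ∑ k ∈ Finset.range n,
        ((X 0 ((j : ℝ) * Δ) ω) ^ 2 - ∫ ω', (X 0 ((j : ℝ) * Δ) ω') ^ 2 ∂ℙ)
        * ((X 0 ((k : ℝ) * Δ) ω) ^ 2 - ∫ ω', (X 0 ((k : ℝ) * Δ) ω') ^ 2 ∂ℙ) := by
    intro ω
    rw [mul_pow, pow_two (∑ k ∈ Finset.range n, _), Finset.sum_mul_sum]
  simp_rw [expand]
  rw [integral_const_mul, integral_finsetSum _ (fun j _ => integrable_finsetSum _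
    (fun k _ => (ou_cov_sq hX (nn j) (nn k)).1))]
  have inner : ∀ j ∈ Finset.range n, ∫ ω, ∑ k ∈ Finset.range n,
        ((X 0 ((j : ℝ) * Δ) ω) ^ 2 - ∫ ω', (X 0 ((j : ℝ) * Δ) ω') ^ 2 ∂ℙ)
        * ((X 0 ((k : ℝ) * Δ) ω) ^ 2 - ∫ ω', (X 0 ((k : ℝ) * Δ) ω') ^ 2 ∂ℙ) ∂ℙ
      ≤ 1 / (θ ^ 3 * Δ) := by
    intro j _
    rw [integral_finsetSum _ (fun k _ => (ou_cov_sq hX (nn j) (nn k)).1)]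
    calc _ ≤ ∑ k ∈ Finset.range n, 1 / (2 * θ ^ 2) * r ^ (((j : ℤ) - k).natAbs) := by
          refine Finset.sum_le_sum fun k _ => ?_
          rw [(ou_cov_sq hX (nn j) (nn k)).2, hX.cov 0 _ _ (nn j) (nn k)]
          have := cov_bound hθ hΔ j k
          rw [← hr] at this
          calc _ ≤ 2 * (r ^ (((j : ℤ) - k).natAbs) / (4 * θ ^ 2)) := by gcongr
            _ = _ := by field_simp; norm_num
      _ ≤ 1 / (2 * θ ^ 2) * (2 / (1 - r)) := by
          rw [← Finset.mul_sum]; gcongr; exact geo_sum r hr0 hr1 n j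
      _ ≤ 1 / (2 * θ ^ 2) * (2 / (θ * Δ)) := by gcongr
      _ = _ := by field_simp
  calc _ ≤ (2 * θ / (n : ℝ)) ^ 2 * (n * (1 / (θ ^ 3 * Δ))) := by
        gcongr
        calc _ ≤ ∑ j ∈ Finset.range n, 1 / (θ ^ 3 * Δ) := Finset.sum_le_sum inner
          _ = _ := by simp
    _ = _ := by field_simp; norm_num

end
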